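/- arXiv:1112.1978 — 2 statements merged into one kernel-verified Lean document; each statement's English description precedes it below -/
import Mathlib

section
/- Let G = (V,E) be a finite simple graph (in particular, without loops) that is (k,l)-anonymous of type II for positive integers k and l, and suppose there exists a vertex of G of degree at least l. Then k + l ≤ |V|. -/
/-- A finite simple graph is `(k,l)`-anonymous of type II if for every vertex `v` and every
subset `S` of `N(v)` with `|S| ≤ l`, at least `k` vertices `u` satisfy `S ⊆ N(u)`. -/
def klAnonymousII {V : Type*} (G : SimpleGraph V) (k l : ℕ) : Prop :=
  ∀ v : V, ∀ S : Set V, S ⊆ G.neighborSet v → S.ncard ≤ l →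
    k ≤ {u : V | S ⊆ G.neighborSet u}.ncard

theorem stmt_4 {V : Type*} [Fintype V] (G : SimpleGraph V) (k l : ℕ)
    (hk : 1 ≤ k) (hl : 1 ≤ l) (hanon : klAnonymousII G k l)
    (hdeg : ∃ v : V, l ≤ (G.neighborSet v).ncard) :
    k + l ≤ Fintype.card V := by
  obtain ⟨v, hv⟩ := hdeg
  obtain ⟨S, hS, hc⟩ := Set.exists_subset_card_eq hv
  have h := hanon v S hS hc.le
  have hd : Disjoint {u : V | S ⊆ G.neighborSet u} S := by
    rw [Set.disjoint_left]
    intro u hu hus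
    exact G.loopless.irrefl u (hu hus)
  have h2 := Set.ncard_union_eq hd (Set.toFinite _) (Set.toFinite _)
  have h3 := Set.ncard_le_card ({u : V | S ⊆ G.neighborSet u} ∪ S)
  rw [Nat.card_eq_fintype_card] at h3
  omega
end

section
/- For all integers n and k with 2 ≤ k ≤ n, the complete graph K_n on n vertices is NOT (k, n−k+1)-anonymous of type II; that is, the bound l ≤ n − k for (k,l)-anonymity of type II of K_n is attained and sharp. -/
theorem stmt_8 (n k : ℕ) (hk : 2 ≤ k) (hkn : k ≤ n) :
    ¬ klAnonymousII (⊤ : SimpleGraph (Fin n)) k (n - k + 1) := by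
  intro h
  let v : Fin n := ⟨0, by omega⟩
  have hc : n - k + 1 ≤ (Finset.univ.erase v).card := by
    rw [Finset.card_erase_of_mem (Finset.mem_univ v), Finset.card_univ, Fintype.card_fin]
    omega
  obtain ⟨S, hS, hcard⟩ := Finset.exists_subset_card_eq hc
  have hN : ∀ u : Fin n, (S : Set (Fin n)) ⊆ (⊤ : SimpleGraph (Fin n)).neighborSet u ↔ u ∉ S := by
    intro u
    constructor
    · intro hu hm
      have h1 := hu (Finset.mem_coe.2 hm)
      simp at h1
    · intro hu x hx
      rw [SimpleGraph.mem_neighborSet, SimpleGraph.top_adj]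
      rintro rfl
      exact hu (Finset.mem_coe.1 hx)
  have hv : v ∉ S := fun hm => by simpa using hS hm
  have h1 := h v S ((hN v).2 hv) (by rw [Set.ncard_coe_finset, hcard])
  have h2 : {u : Fin n | (S : Set (Fin n)) ⊆ (⊤ : SimpleGraph (Fin n)).neighborSet u}
      = ((Sᶜ : Finset (Fin n)) : Set (Fin n)) := by
    ext u
    rw [Set.mem_setOf_eq, hN u, Finset.mem_coe, Finset.mem_compl]
  rw [h2, Set.ncard_coe_finset, Finset.card_compl, hcard, Fintype.card_fin] at h1
  omega
end
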